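/- Let Ḡ = ⟨x, z | z = [x,z]² ⟩ and let H̄ be the normal closure of z in Ḡ. Then H̄ is generated by the elements z_i = x^i z x^{-i} (i ∈ ℤ), and H̄ is isomorphic to the presented group A = ⟨ u_i (i ∈ ℤ) | u_{i+1}² = u_i³ (i ∈ ℤ) ⟩ via an isomorphism sending u_i to z_{i+1} z_i⁻¹. -/

import Mathlib

open scoped commutatorElement in
/-- The single relator `z ([x,z]²)⁻¹` in the free group on two generators
(generator `0` plays the role of `x`, generator `1` the role of `z`). -/
def gbarRels : Set (FreeGroup (Fin 2)) :=
  {FreeGroup.of 1 * (⁅(FreeGroup.of 0 : FreeGroup (Fin 2)), FreeGroup.of 1⁆ ^ 2)⁻¹}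

/-- The group `Ḡ = ⟨x, z | z = [x,z]²⟩`. -/
abbrev GBar := PresentedGroup gbarRels

/-- `x ∈ Ḡ`. -/
def gbarX : GBar := PresentedGroup.of 0

/-- `z ∈ Ḡ`. -/
def gbarZ : GBar := PresentedGroup.of 1

/-- `z_i = x^i z x^{-i} ∈ Ḡ`, for `i ∈ ℤ`. -/
def gbarZi (i : ℤ) : GBar := gbarX ^ i * gbarZ * gbarX ^ (-i)

/-- The relators `u_{i+1}² u_i⁻³` (`i ∈ ℤ`) in the free group on generators
`u_i` indexed by `ℤ`. -/
def aRels : Set (FreeGroup ℤ) :=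
  Set.range fun i : ℤ => FreeGroup.of (i + 1) ^ 2 * (FreeGroup.of i ^ 3)⁻¹

/-- The group `A = ⟨ u_i (i ∈ ℤ) | u_{i+1}² = u_i³ ⟩`. -/
abbrev AGroup := PresentedGroup aRels

/-!
Conjugation by `x` permutes the `z_i`, so the subgroup they generate is normalized by both
generators `x` and `z = z_0` of `Ḡ`; being normal, it is `H̄`.

Conjugating `z = [x,z]²` by `x^i` gives `z_i = v_i²` with `v_i = z_{i+1} z_i⁻¹`. Hence
`v_{i+1}² = z_{i+1} = v_i z_i = v_i³`, so `u_i ↦ v_i` defines a homomorphism `A → Ḡ`, whose image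
contains each `z_i = v_i²` and is therefore the subgroup generated by the `z_i`.

It is injective because it becomes the inclusion of `A` after composition with a homomorphism
`Ḡ → A ⋊ ℤ`, where `1 ∈ ℤ` acts by the shift `u_i ↦ u_{i+1}`. That homomorphism sends `x` to the
generator `t` of `ℤ` and `z` to `u_0²`; it respects the relator of `Ḡ` since
`[t, u_0²] = u_1² u_0⁻² = u_0`.
-/

open scoped commutatorElement

section Group

variable {G : Type*} [Group G]

theorem closure_normal_of_mem_normalizer {x : G} {s : Set G} (hx : x ∈ Subgroup.normalizer s)
    (hs : Subgroup.closure (insert x s) = ⊤) : (Subgroup.closure s).Normal := by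
  rw [← Subgroup.normalizer_eq_top_iff, eq_top_iff, ← hs, Subgroup.closure_le,
    Set.insert_subset_iff]
  exact ⟨Subgroup.normalizer_le_normalizer_closure s hx,
    Subgroup.subset_closure.trans Subgroup.le_normalizer⟩

theorem mem_normalizer_range_zpow_conj (x z : G) :
    x ∈ Subgroup.normalizer (Set.range fun i : ℤ ↦ x ^ i * z * x ^ (-i)) := by
  have conj_term (i : ℤ) :
      MulAut.conj x (x ^ i * z * x ^ (-i)) = x ^ (i + 1) * z * x ^ (-(i + 1)) := by
    rw [MulAut.conj_apply]
    group
  rw [Subgroup.mem_normalizer_iff_conj_image_eq, ← Set.range_comp]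
  simp only [Function.comp_def, conj_term]
  exact (Equiv.addRight (1 : ℤ)).surjective.range_comp fun i : ℤ ↦ x ^ i * z * x ^ (-i)

theorem normalClosure_singleton_eq_closure_range_zpow_conj {x z : G}
    (hxz : Subgroup.closure {x, z} = ⊤) :
    Subgroup.normalClosure {z} =
      Subgroup.closure (Set.range fun i : ℤ ↦ x ^ i * z * x ^ (-i)) := by
  set s : Set G := Set.range fun i : ℤ ↦ x ^ i * z * x ^ (-i)
  have hzs : z ∈ s := ⟨0, by simp⟩
  apply le_antisymm
  · have hs : Subgroup.closure (insert x s) = ⊤ :=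
      top_unique <| hxz.ge.trans <| Subgroup.closure_mono <|
        Set.insert_subset_insert <| Set.singleton_subset_iff.mpr hzs
    have : (Subgroup.closure s).Normal :=
      closure_normal_of_mem_normalizer (mem_normalizer_range_zpow_conj x z) hs
    exact Subgroup.normalClosure_le_normal <|
      Set.singleton_subset_iff.mpr <| Subgroup.subset_closure hzs
  · rw [Subgroup.closure_le]
    rintro _ ⟨i, rfl⟩
    simpa only [zpow_neg, SetLike.mem_coe] using Subgroup.normalClosure_normal.conj_mem z
      (Subgroup.subset_normalClosure (Set.mem_singleton z)) (x ^ i)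

theorem mul_inv_pow_eq_mul_inv_pow_succ {a b c : G} {n : ℕ} (ha : a = (b * a⁻¹) ^ n)
    (hb : b = (c * b⁻¹) ^ n) : (c * b⁻¹) ^ n = (b * a⁻¹) ^ (n + 1) := by
  rw [← hb, pow_succ', ← ha, inv_mul_cancel_right]

theorem pow_mul_pow_inv_eq_of_pow_eq_pow_succ {a b : G} {n : ℕ} (h : b ^ n = a ^ (n + 1)) :
    b ^ n * (a ^ n)⁻¹ = a := by
  rw [h, pow_succ', mul_inv_cancel_right]

end Group

theorem gbarZ_eq_commutator_sq : gbarZ = ⁅gbarX, gbarZ⁆ ^ 2 := by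
  have hmk := PresentedGroup.mk_eq_mk_of_mul_inv_mem (rels := gbarRels) (Set.mem_singleton _)
  rwa [map_pow, map_commutatorElement] at hmk

theorem closure_gbarX_gbarZ : Subgroup.closure {gbarX, gbarZ} = ⊤ := by
  rw [← PresentedGroup.closure_range_of gbarRels]
  congr 1
  ext g
  simp [Fin.exists_fin_two, gbarX, gbarZ, eq_comm]

theorem gbarZi_eq_conj (i : ℤ) : gbarZi i = MulAut.conj (gbarX ^ i) gbarZ := by
  rw [gbarZi, zpow_neg, MulAut.conj_apply]

theorem gbarZi_succ_mul_inv_eq_conj (i : ℤ) :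
    gbarZi (i + 1) * (gbarZi i)⁻¹ = MulAut.conj (gbarX ^ i) ⁅gbarX, gbarZ⁆ := by
  rw [gbarZi, gbarZi, MulAut.conj_apply, commutatorElement_def]
  group

theorem gbarZi_eq_sq (i : ℤ) : gbarZi i = (gbarZi (i + 1) * (gbarZi i)⁻¹) ^ 2 := by
  rw [gbarZi_succ_mul_inv_eq_conj, ← map_pow, ← gbarZ_eq_commutator_sq, gbarZi_eq_conj]

namespace AGroup

theorem of_succ_sq (i : ℤ) :
    (PresentedGroup.of (i + 1) : AGroup) ^ 2 = PresentedGroup.of i ^ 3 := by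
  have hmk := PresentedGroup.mk_eq_mk_of_mul_inv_mem (rels := aRels) ⟨i, rfl⟩
  rwa [map_pow, map_pow] at hmk

section Lift

variable {G : Type*} [Group G] (v : ℤ → G) (hv : ∀ i, v (i + 1) ^ 2 = v i ^ 3)

/-- The universal property of `A`: the homomorphism sending `u_i` to `v i`. -/
def lift : AGroup →* G :=
  PresentedGroup.toGroup (f := v) (by
    rintro _ ⟨i, rfl⟩
    simp [hv])

@[simp]
theorem lift_of (i : ℤ) : lift v hv (PresentedGroup.of i) = v i :=
  PresentedGroup.toGroup.of _

end Lift

/-- The endomorphism `u_i ↦ u_{i+n}` of `A`. -/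
def shiftEnd (n : ℤ) : AGroup →* AGroup :=
  lift (fun i ↦ PresentedGroup.of (i + n)) fun i ↦ by
    rw [add_right_comm, of_succ_sq]

@[simp]
theorem shiftEnd_of (n i : ℤ) :
    shiftEnd n (PresentedGroup.of i) = PresentedGroup.of (i + n) :=
  lift_of _ _ _

theorem shiftEnd_zero : shiftEnd 0 = MonoidHom.id AGroup := by
  ext i
  simp

theorem shiftEnd_add (m n : ℤ) : shiftEnd (m + n) = (shiftEnd m).comp (shiftEnd n) := by
  ext i
  simp [add_assoc, add_comm n m]

/-- The action of `ℤ` on `A` in which `n` acts by `u_i ↦ u_{i+n}`. -/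
def shift : Multiplicative ℤ →* MulAut AGroup where
  toFun n := MonoidHom.toMulEquiv (shiftEnd n.toAdd) (shiftEnd (-n.toAdd))
    (by rw [← shiftEnd_add, neg_add_cancel, shiftEnd_zero])
    (by rw [← shiftEnd_add, add_neg_cancel, shiftEnd_zero])
  map_one' := MulEquiv.toMonoidHom_injective shiftEnd_zero
  map_mul' m n := MulEquiv.toMonoidHom_injective (shiftEnd_add m.toAdd n.toAdd)

theorem shift_of (n : Multiplicative ℤ) (i : ℤ) :
    shift n (PresentedGroup.of i) = PresentedGroup.of (i + n.toAdd) :=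
  shiftEnd_of _ _

/-- The semidirect product `A ⋊ ℤ` for the shift action, into which `Ḡ` is mapped in order to
detect the elements of `A`. -/
abbrev ShiftProduct := AGroup ⋊[shift] Multiplicative ℤ

namespace ShiftProduct

/-- The generator `t` of the factor `ℤ` of `A ⋊ ℤ`. -/
def t : ShiftProduct := SemidirectProduct.inr (Multiplicative.ofAdd 1)

/-- The generator `u_i` of the factor `A` of `A ⋊ ℤ`. -/
def u (i : ℤ) : ShiftProduct := SemidirectProduct.inl (PresentedGroup.of i)

theorem t_zpow_mul_u_mul_inv (k i : ℤ) : t ^ k * u i * (t ^ k)⁻¹ = u (i + k) := by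
  rw [t, u, u, ← map_zpow, ← map_inv, ← SemidirectProduct.inl_aut, shift_of]
  simp

theorem u_succ_sq_mul_inv (i : ℤ) : u (i + 1) ^ 2 * (u i ^ 2)⁻¹ = u i := by
  apply pow_mul_pow_inv_eq_of_pow_eq_pow_succ
  rw [u, u, ← map_pow, ← map_pow, of_succ_sq]

theorem commutator_t_u_zero_sq : ⁅t, u 0 ^ 2⁆ = u 0 := by
  have conj_u_zero := t_zpow_mul_u_mul_inv 1 0
  rw [zpow_one] at conj_u_zero
  rw [commutatorElement_def, ← conj_pow, conj_u_zero, u_succ_sq_mul_inv]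

/-- The homomorphism `Ḡ → A ⋊ ℤ` with `x ↦ t` and `z ↦ u_0²`. -/
def ofGBar : GBar →* ShiftProduct :=
  PresentedGroup.toGroup (f := ![t, u 0 ^ 2]) (by
    rintro _ rfl
    rw [map_mul, map_inv, map_pow, map_commutatorElement, mul_inv_eq_one]
    simp [commutator_t_u_zero_sq])

theorem ofGBar_gbarX : ofGBar gbarX = t :=
  PresentedGroup.toGroup.of _

theorem ofGBar_gbarZ : ofGBar gbarZ = u 0 ^ 2 :=
  PresentedGroup.toGroup.of _

theorem ofGBar_gbarZi (i : ℤ) : ofGBar (gbarZi i) = u i ^ 2 := by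
  rw [gbarZi_eq_conj, MulAut.conj_apply, map_mul, map_mul, map_inv, map_zpow, ofGBar_gbarX,
    ofGBar_gbarZ, ← conj_pow, t_zpow_mul_u_mul_inv, zero_add]

end ShiftProduct

/-- The homomorphism `A → Ḡ` with `u_i ↦ z_{i+1} z_i⁻¹`. -/
def toGBar : AGroup →* GBar :=
  lift (fun i ↦ gbarZi (i + 1) * (gbarZi i)⁻¹) fun i ↦
    mul_inv_pow_eq_mul_inv_pow_succ (gbarZi_eq_sq i) (gbarZi_eq_sq (i + 1))

theorem toGBar_of (i : ℤ) :
    toGBar (PresentedGroup.of i) = gbarZi (i + 1) * (gbarZi i)⁻¹ :=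
  lift_of _ _ _

theorem ofGBar_comp_toGBar : ShiftProduct.ofGBar.comp toGBar = SemidirectProduct.inl := by
  ext1 i
  rw [MonoidHom.comp_apply, toGBar_of, map_mul, map_inv, ShiftProduct.ofGBar_gbarZi,
    ShiftProduct.ofGBar_gbarZi, ShiftProduct.u_succ_sq_mul_inv, ShiftProduct.u]

theorem toGBar_injective : Function.Injective toGBar := by
  apply Function.Injective.of_comp (f := ShiftProduct.ofGBar)
  rw [← MonoidHom.coe_comp, ofGBar_comp_toGBar]
  exact SemidirectProduct.inl_injective

theorem range_toGBar : toGBar.range = Subgroup.closure (Set.range gbarZi) := by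
  apply le_antisymm
  · rw [MonoidHom.range_eq_map, ← PresentedGroup.closure_range_of, MonoidHom.map_closure,
      Subgroup.closure_le]
    rintro _ ⟨_, ⟨i, rfl⟩, rfl⟩
    rw [toGBar_of]
    exact mul_mem (Subgroup.subset_closure ⟨_, rfl⟩)
      (inv_mem (Subgroup.subset_closure ⟨_, rfl⟩))
  · rw [Subgroup.closure_le]
    rintro _ ⟨i, rfl⟩
    exact ⟨PresentedGroup.of i ^ 2, by rw [map_pow, toGBar_of, ← gbarZi_eq_sq]⟩

end AGroup

/-- In `Ḡ = ⟨x, z | z = [x,z]²⟩`, the normal closure `H̄` of `z` is generated by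
the elements `z_i = x^i z x^{-i}` (`i ∈ ℤ`), and `H̄` is isomorphic to
`A = ⟨ u_i (i ∈ ℤ) | u_{i+1}² = u_i³ ⟩` via an isomorphism sending `u_i` to
`z_{i+1} z_i⁻¹`. -/
theorem normalClosure_z_eq_closure_zi_and_iso :
    Subgroup.normalClosure {gbarZ} = Subgroup.closure (Set.range gbarZi) ∧
    ∃ e : AGroup ≃* ↥(Subgroup.normalClosure {gbarZ}),
      ∀ i : ℤ, (e (PresentedGroup.of i) : GBar) = gbarZi (i + 1) * (gbarZi i)⁻¹ := by
  have closure_eq : Subgroup.normalClosure {gbarZ} = Subgroup.closure (Set.range gbarZi) :=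
    normalClosure_singleton_eq_closure_range_zpow_conj closure_gbarX_gbarZ
  have range_eq : AGroup.toGBar.range = Subgroup.normalClosure {gbarZ} :=
    AGroup.range_toGBar.trans closure_eq.symm
  exact ⟨closure_eq, (MonoidHom.ofInjective AGroup.toGBar_injective).trans
    (MulEquiv.subgroupCongr range_eq), AGroup.toGBar_of⟩
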